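/- arXiv:2011.00732 — 3 statements merged into one kernel-verified Lean document; each statement's English description precedes it below -/
import Mathlib

section
/- In the abstract framework, the primal domain 𝒞 := {g ∈ L⁰₊(μ) : ∫_Ω (g − f) h dμ ≤ 1 for all h ∈ 𝒟} is a convex subset of L⁰₊(μ), it is closed with respect to μ-a.e. convergence (if gⁿ ∈ 𝒞 and gⁿ → g μ-a.e. then g ∈ 𝒞), and for every strictly positive h̄ ∈ 𝒟 one has ∫_Ω g h̄ dμ ≤ 1 + ā/r̲ for all g ∈ 𝒞; consequently 𝒞 is bounded in L⁰(μ) (bounded in μ-measure). Moreover 𝒟 is bounded in L¹(μ). -/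
open MeasureTheory Filter Topology

variable {Ω : Type}

/-- The abstract primal domain `𝒞(x)`: nonnegative measurable `g` such that
`∫ (g − f) h dμ ≤ x` for all `h ∈ 𝒟` (expressed, for nonnegative quantities,
as `∫ g h dμ ≤ x + ∫ f h dμ` using lower integrals). -/
def memC [MeasurableSpace Ω] (μ : Measure Ω) (D : Set (Ω → ℝ)) (f : Ω → ℝ)
    (x : ℝ) (g : Ω → ℝ) : Prop :=
  Measurable g ∧ (∀ᵐ ω ∂μ, 0 ≤ g ω) ∧
    ∀ h ∈ D, (∫⁻ ω, ENNReal.ofReal (g ω * h ω) ∂μ) ≤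
      ENNReal.ofReal x + ∫⁻ ω, ENNReal.ofReal (f ω * h ω) ∂μ

/-- The abstract dual domain `𝒟(y) = y 𝒟`. -/
def memD (D : Set (Ω → ℝ)) (y : ℝ) (h : Ω → ℝ) : Prop :=
  ∃ h₀ ∈ D, h = fun ω => y * h₀ ω

/-- The convex conjugate `V(y) = sup_{x>0} (U(x) − x y)`. -/
noncomputable def Vconj (U : ℝ → ℝ) (y : ℝ) : ℝ :=
  sSup {z | ∃ x : ℝ, 0 < x ∧ z = U x - x * y}

/-- The primal value function `u(x) = sup_{g ∈ 𝒞(x)} ∫ U(g) dμ`. -/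
noncomputable def uval [MeasurableSpace Ω] (μ : Measure Ω) (D : Set (Ω → ℝ))
    (f : Ω → ℝ) (U : ℝ → ℝ) (x : ℝ) : ℝ :=
  sSup {z | ∃ g, memC μ D f x g ∧ z = ∫ ω, U (g ω) ∂μ}

/-- The dual value function `v(y) = inf_{h ∈ 𝒟(y)} ∫ (V(h) + f h) dμ`. -/
noncomputable def vval [MeasurableSpace Ω] (μ : Measure Ω) (D : Set (Ω → ℝ))
    (f : Ω → ℝ) (U : ℝ → ℝ) (y : ℝ) : ℝ :=
  sInf {z | ∃ h, memD D y h ∧ z = ∫ ω, (Vconj U (h ω) + f ω * h ω) ∂μ}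

/-- **Properties of the primal and dual domains** (Proposition `propertiesCD`):
`𝒞` is convex, closed under μ-a.e. convergence, satisfies
`∫ g h̄ dμ ≤ 1 + ā/r̲` for every strictly positive `h̄ ∈ 𝒟`, is bounded in
`L⁰(μ)`, and `𝒟` is bounded in `L¹(μ)`. -/
theorem primal_dual_domain_properties
    [MeasurableSpace Ω] (μ : Measure Ω) [IsFiniteMeasure μ]
    (D : Set (Ω → ℝ)) (rlow : ℝ) (hrlow : 0 < rlow)
    (hD_meas : ∀ h ∈ D, Measurable h)
    (hD_nonneg : ∀ h ∈ D, ∀ᵐ ω ∂μ, 0 ≤ h ω)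
    (hD_conv : ∀ h₁ ∈ D, ∀ h₂ ∈ D, ∀ a b : ℝ, 0 ≤ a → 0 ≤ b → a + b = 1 →
      (fun ω => a * h₁ ω + b * h₂ ω) ∈ D)
    (hD_closed : ∀ hs : ℕ → Ω → ℝ, (∀ n, hs n ∈ D) → ∀ h : Ω → ℝ, Measurable h →
      (∀ᵐ ω ∂μ, Tendsto (fun n => hs n ω) atTop (𝓝 (h ω))) → h ∈ D)
    (hD_bound : ∀ h ∈ D, (∫⁻ ω, ENNReal.ofReal (h ω) ∂μ) ≤ ENNReal.ofReal (1 / rlow))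
    (hD_pos : ∃ hb ∈ D, ∀ᵐ ω ∂μ, 0 < hb ω)
    (f : Ω → ℝ) (abar : ℝ) (habar : 0 < abar) (hf_meas : Measurable f)
    (hf_bound : ∀ᵐ ω ∂μ, 0 ≤ f ω ∧ f ω ≤ abar)
 :
    (∀ g₁, memC μ D f 1 g₁ → ∀ g₂, memC μ D f 1 g₂ → ∀ a b : ℝ, 0 ≤ a → 0 ≤ b →
      a + b = 1 → memC μ D f 1 (fun ω => a * g₁ ω + b * g₂ ω)) ∧
    (∀ gs : ℕ → Ω → ℝ, (∀ n, memC μ D f 1 (gs n)) → ∀ g : Ω → ℝ, Measurable g →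
      (∀ᵐ ω ∂μ, Tendsto (fun n => gs n ω) atTop (𝓝 (g ω))) → memC μ D f 1 g) ∧
    (∀ hb ∈ D, (∀ᵐ ω ∂μ, 0 < hb ω) → ∀ g, memC μ D f 1 g →
      (∫⁻ ω, ENNReal.ofReal (g ω * hb ω) ∂μ) ≤ ENNReal.ofReal (1 + abar / rlow)) ∧
    (∀ ε : ℝ, 0 < ε → ∃ M : ℝ, 0 < M ∧ ∀ g, memC μ D f 1 g →
      μ {ω | M < g ω} < ENNReal.ofReal ε) ∧
    (∀ h ∈ D, (∫⁻ ω, ENNReal.ofReal (h ω) ∂μ) ≤ ENNReal.ofReal (1 / rlow)) := by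
  have hbd : ∀ hb ∈ D, ∀ g, memC μ D f 1 g →
      (∫⁻ ω, ENNReal.ofReal (g ω * hb ω) ∂μ) ≤ ENNReal.ofReal (1 + abar / rlow) := by
    intro hb hbD g hg
    refine (hg.2.2 hb hbD).trans ?_
    rw [ENNReal.ofReal_add zero_le_one (by positivity)]
    gcongr
    calc ∫⁻ ω, ENNReal.ofReal (f ω * hb ω) ∂μ
        ≤ ∫⁻ ω, ENNReal.ofReal abar * ENNReal.ofReal (hb ω) ∂μ := by
          apply lintegral_mono_ae
          filter_upwards [hf_bound, hD_nonneg hb hbD] with ω h1 h2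
          rw [← ENNReal.ofReal_mul habar.le]
          exact ENNReal.ofReal_le_ofReal (mul_le_mul_of_nonneg_right h1.2 h2)
      _ = ENNReal.ofReal abar * ∫⁻ ω, ENNReal.ofReal (hb ω) ∂μ :=
          lintegral_const_mul _ (hD_meas hb hbD).ennreal_ofReal
      _ ≤ ENNReal.ofReal abar * ENNReal.ofReal (1 / rlow) := by
          gcongr
          exact hD_bound hb hbD
      _ = ENNReal.ofReal (abar / rlow) := by
          rw [← ENNReal.ofReal_mul habar.le, mul_one_div]
  refine ⟨?_, ?_, fun hb hbD _ => hbd hb hbD, ?_, hD_bound⟩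
  · intro g₁ h₁ g₂ h₂ a b ha hb hab
    refine ⟨(h₁.1.const_mul a).add (h₂.1.const_mul b), ?_, ?_⟩
    · filter_upwards [h₁.2.1, h₂.2.1] with ω p q
      positivity
    · intro h hh
      have hm := hD_meas h hh
      set K := ENNReal.ofReal 1 + ∫⁻ ω, ENNReal.ofReal (f ω * h ω) ∂μ with hK
      calc ∫⁻ ω, ENNReal.ofReal ((a * g₁ ω + b * g₂ ω) * h ω) ∂μ
          = ∫⁻ ω, (ENNReal.ofReal a * ENNReal.ofReal (g₁ ω * h ω)
              + ENNReal.ofReal b * ENNReal.ofReal (g₂ ω * h ω)) ∂μ := by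
            apply lintegral_congr_ae
            filter_upwards [h₁.2.1, h₂.2.1, hD_nonneg h hh] with ω p q r
            rw [← ENNReal.ofReal_mul ha, ← ENNReal.ofReal_mul hb,
              ← ENNReal.ofReal_add (by positivity) (by positivity)]
            congr 1
            ring
        _ = ENNReal.ofReal a * ∫⁻ ω, ENNReal.ofReal (g₁ ω * h ω) ∂μ
              + ENNReal.ofReal b * ∫⁻ ω, ENNReal.ofReal (g₂ ω * h ω) ∂μ := by
            have m₁ : Measurable fun ω => ENNReal.ofReal (g₁ ω * h ω) :=
              (h₁.1.mul hm).ennreal_ofReal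
            have m₂ : Measurable fun ω => ENNReal.ofReal (g₂ ω * h ω) :=
              (h₂.1.mul hm).ennreal_ofReal
            rw [lintegral_add_left (m₁.const_mul _),
              lintegral_const_mul _ m₁, lintegral_const_mul _ m₂]
        _ ≤ ENNReal.ofReal a * K + ENNReal.ofReal b * K := by
            gcongr
            · exact h₁.2.2 h hh
            · exact h₂.2.2 h hh
        _ = K := by
            rw [← add_mul, ← ENNReal.ofReal_add ha hb, hab, ENNReal.ofReal_one, one_mul]
  · intro gs hgs g hg hlim
    refine ⟨hg, ?_, ?_⟩
    · filter_upwards [hlim, ae_all_iff.2 fun n => (hgs n).2.1] with ω h1 h2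
      exact ge_of_tendsto' h1 h2
    · intro h hh
      have hm := hD_meas h hh
      calc ∫⁻ ω, ENNReal.ofReal (g ω * h ω) ∂μ
          = ∫⁻ ω, liminf (fun n => ENNReal.ofReal (gs n ω * h ω)) atTop ∂μ := by
            apply lintegral_congr_ae
            filter_upwards [hlim] with ω h1
            exact ((ENNReal.tendsto_ofReal (h1.mul_const (h ω))).liminf_eq).symm
        _ ≤ liminf (fun n => ∫⁻ ω, ENNReal.ofReal (gs n ω * h ω) ∂μ) atTop :=
            lintegral_liminf_le fun n => ((hgs n).1.mul hm).ennreal_ofReal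
        _ ≤ _ := by
            refine (liminf_le_liminf
              (Eventually.of_forall fun n => (hgs n).2.2 h hh)).trans ?_
            simp
  · intro ε hε
    obtain ⟨hb, hbD, hpos⟩ := hD_pos
    have hm := hD_meas hb hbD
    have hanti : Antitone fun n : ℕ => {ω | hb ω ≤ 1 / ((n : ℝ) + 1)} := by
      intro m n hmn ω hω
      have hω' : hb ω ≤ 1 / ((n : ℝ) + 1) := hω
      exact le_trans hω' (Nat.one_div_le_one_div hmn)
    have htend := tendsto_measure_iInter_atTop (μ := μ)
      (fun n : ℕ => (measurableSet_le hm measurable_const :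
        MeasurableSet {ω | hb ω ≤ 1 / ((n : ℝ) + 1)}).nullMeasurableSet) hanti
      ⟨0, measure_ne_top _ _⟩
    have hzero : μ (⋂ n : ℕ, {ω | hb ω ≤ 1 / ((n : ℝ) + 1)}) = 0 := by
      refine measure_mono_null ?_ (ae_iff.1 hpos)
      intro ω hω hlt
      obtain ⟨n, hn⟩ := exists_nat_one_div_lt hlt
      exact absurd (Set.mem_iInter.1 hω n) (not_le.2 hn)
    rw [hzero] at htend
    obtain ⟨n, hn⟩ := (htend.eventually
      (gt_mem_nhds (ENNReal.ofReal_pos.2 (half_pos hε)))).exists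
    set δ : ℝ := 1 / ((n : ℝ) + 1) with hδ
    have hδp : 0 < δ := by positivity
    set C : ℝ := 1 + abar / rlow with hC
    have hCp : 0 < C := by positivity
    refine ⟨2 * C / (ε * δ), by positivity, fun g hg => ?_⟩
    set c : ℝ := 2 * C / ε with hc
    have hcp : 0 < c := by positivity
    have hMδ : 2 * C / (ε * δ) * δ = c := by
      rw [hc]; field_simp
    have hmk := (mul_meas_ge_le_lintegral (μ := μ)
      (hg.1.mul hm).ennreal_ofReal (ENNReal.ofReal c)).trans (hbd hb hbD g hg)
    have hmk2 : μ {ω | ENNReal.ofReal c ≤ ENNReal.ofReal (g ω * hb ω)}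
        ≤ ENNReal.ofReal (ε / 2) := by
      have h1 : ENNReal.ofReal C = ENNReal.ofReal c * ENNReal.ofReal (ε / 2) := by
        rw [← ENNReal.ofReal_mul hcp.le]
        congr 1
        rw [hc]; field_simp
      rw [h1] at hmk
      exact (ENNReal.mul_le_mul_iff_right (ENNReal.ofReal_pos.2 hcp).ne'
        ENNReal.ofReal_ne_top).1 hmk
    calc μ {ω | 2 * C / (ε * δ) < g ω}
        ≤ μ ({ω | hb ω ≤ δ} ∪ {ω | ENNReal.ofReal c ≤ ENNReal.ofReal (g ω * hb ω)}) := by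
          apply measure_mono
          intro ω hω
          by_cases hle : hb ω ≤ δ
          · exact Or.inl hle
          · refine Or.inr (ENNReal.ofReal_le_ofReal ?_)
            rw [← hMδ]
            have hM : 0 < 2 * C / (ε * δ) := by positivity
            have hω' : 2 * C / (ε * δ) < g ω := hω
            exact mul_le_mul hω'.le (not_le.1 hle).le hδp.le (hM.trans hω').le
      _ ≤ μ {ω | hb ω ≤ δ} + μ {ω | ENNReal.ofReal c ≤ ENNReal.ofReal (g ω * hb ω)} :=
          measure_union_le _ _
      _ < ENNReal.ofReal (ε / 2) + ENNReal.ofReal (ε / 2) :=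
          ENNReal.add_lt_add_of_lt_of_le (measure_ne_top _ _) hn hmk2
      _ = ENNReal.ofReal ε := by
          rw [← ENNReal.ofReal_add (by positivity) (by positivity), add_halves]
end

section
/- In the abstract framework, for every y > 0 the family {V⁻(h) : h ∈ 𝒟(y)} of negative parts of the conjugate function evaluated at dual elements is uniformly integrable with respect to μ, where V⁻ := max(−V, 0). -/
open MeasureTheory Filter Topology

variable {Ω : Type}

/-- **Uniform integrability of `V⁻(h)`, `h ∈ 𝒟(y)`** (Lemma `Vminush`). -/
theorem dual_uniform_integrability
    [MeasurableSpace Ω] (μ : Measure Ω) [IsFiniteMeasure μ]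
    (D : Set (Ω → ℝ)) (rlow : ℝ) (hrlow : 0 < rlow)
    (hD_meas : ∀ h ∈ D, Measurable h)
    (hD_nonneg : ∀ h ∈ D, ∀ᵐ ω ∂μ, 0 ≤ h ω)
    (hD_conv : ∀ h₁ ∈ D, ∀ h₂ ∈ D, ∀ a b : ℝ, 0 ≤ a → 0 ≤ b → a + b = 1 →
      (fun ω => a * h₁ ω + b * h₂ ω) ∈ D)
    (hD_closed : ∀ hs : ℕ → Ω → ℝ, (∀ n, hs n ∈ D) → ∀ h : Ω → ℝ, Measurable h →
      (∀ᵐ ω ∂μ, Tendsto (fun n => hs n ω) atTop (𝓝 (h ω))) → h ∈ D)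
    (hD_bound : ∀ h ∈ D, (∫⁻ ω, ENNReal.ofReal (h ω) ∂μ) ≤ ENNReal.ofReal (1 / rlow))
    (U : ℝ → ℝ)
    (hU_sc : StrictConcaveOn ℝ (Set.Ioi 0) U)
    (hU_mono : StrictMonoOn U (Set.Ioi 0))
    (hU_diff : ∀ x : ℝ, 0 < x → HasDerivAt U (deriv U x) x)
    (hU_contDeriv : ContinuousOn (deriv U) (Set.Ioi 0))
    (hU_inada0 : Tendsto (deriv U) (𝓝[>] (0:ℝ)) atTop)
    (hU_inadaInf : Tendsto (deriv U) atTop (𝓝 (0:ℝ)))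
 :
    ∀ y : ℝ, 0 < y → ∀ ε : ℝ, 0 < ε → ∃ K : ℝ, ∀ h, memD D y h →
      (∫⁻ ω in {ω | K < max (-(Vconj U (h ω))) 0},
          ENNReal.ofReal (max (-(Vconj U (h ω))) 0) ∂μ)
        ≤ ENNReal.ofReal ε := by
  intro y hy ε hε
  obtain ⟨x, hx⟩ : ∃ x : ℝ, x = ε * rlow / (2 * y) := ⟨_, rfl⟩
  have hx0 : 0 < x := by rw [hx]; positivity
  refine ⟨2 * |U x|, ?_⟩
  rintro h ⟨h₀, hh₀, rfl⟩
  have hm : Measurable h₀ := hD_meas h₀ hh₀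
  have hc : 0 ≤ 2 * x * y := by positivity
  calc _ ≤ ∫⁻ ω in {ω | 2 * |U x| < max (-(Vconj U (y * h₀ ω))) 0},
          ENNReal.ofReal (2 * x * y) * ENNReal.ofReal (h₀ ω) ∂μ := by
        refine setLIntegral_mono_ae (by fun_prop) (Eventually.of_forall fun ω hω => ?_)
        rw [← ENNReal.ofReal_mul hc]
        apply ENNReal.ofReal_le_ofReal
        have hω' : 2 * |U x| < max (-(Vconj U (y * h₀ ω))) 0 := hω
        have hC := abs_nonneg (U x)
        have hC' := neg_abs_le (U x)
        have hpos : 2 * |U x| < -(Vconj U (y * h₀ ω)) := by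
          rcases lt_max_iff.1 hω' with h1 | h1 <;> linarith
        rw [max_eq_left (by linarith)]
        have hV : U x - x * (y * h₀ ω) ≤ Vconj U (y * h₀ ω) := by
          by_cases hb : BddAbove {z | ∃ x : ℝ, 0 < x ∧ z = U x - x * (y * h₀ ω)}
          · exact le_csSup hb ⟨x, hx0, rfl⟩
          · have : Vconj U (y * h₀ ω) = 0 := Real.sSup_of_not_bddAbove hb
            linarith
        nlinarith
    _ ≤ ∫⁻ ω, ENNReal.ofReal (2 * x * y) * ENNReal.ofReal (h₀ ω) ∂μ :=
        setLIntegral_le_lintegral _ _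
    _ = ENNReal.ofReal (2 * x * y) * ∫⁻ ω, ENNReal.ofReal (h₀ ω) ∂μ :=
        lintegral_const_mul _ (by fun_prop)
    _ ≤ ENNReal.ofReal (2 * x * y) * ENNReal.ofReal (1 / rlow) := by
        gcongr
        exact hD_bound h₀ hh₀
    _ = ENNReal.ofReal ε := by
        rw [← ENNReal.ofReal_mul hc, hx]
        congr 1
        field_simp
end

section
/- Let (Ω, ℱ, (ℱ_t)_{t≥0}, ℙ) be a filtered probability space satisfying the usual conditions. Let X, Y be nonnegative càdlàg adapted processes such that the product XY is a supermartingale, and let c, f be nonnegative progressively measurable processes with E[∫₀^∞ f_t Y_t dt] < ∞. Suppose the process Λ_t := X_t Y_t + ∫₀^t (c_s − f_s) Y_s ds is a supermartingale with Λ₀ = 1, and that the budget constraint is saturated: E[∫₀^∞ (c_t − f_t) Y_t dt] = 1. Then: (i) Λ is a martingale on [0,∞), i.e. E[Λ_t | ℱ_s] = Λ_s a.s. for all s ≤ t; (ii) Λ converges a.s. to an integrable random variable Λ_∞ and, extended by Λ_∞, is a uniformly integrable martingale; (iii) XY is a potential: lim_{t→∞} E[X_t Y_t] = 0; (iv) X_t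 Y_t converges a.s. as t → ∞ and its limit is 0 a.s.; and consequently X_t Y_t = E[∫_t^∞ (c_s − f_s) Y_s ds | ℱ_t] for every t ≥ 0. -/
open MeasureTheory Filter Topology

/-- A right-continuous process with measurable sections is jointly measurable. -/
lemma owp_measurable_of_rc {Ω : Type} {m0 : MeasurableSpace Ω} (Y : ℝ → Ω → ℝ)
    (hm : ∀ t, Measurable (Y t))
    (hrc : ∀ ω t, ContinuousWithinAt (fun s => Y s ω) (Set.Ici t) t) :
    Measurable (fun p : ℝ × Ω => Y p.1 p.2) := by
  let F : ℕ → ℝ × Ω → ℝ := fun n p =>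
    Y (((⌊p.1 * ((n : ℝ) + 1)⌋ : ℤ) + 1 : ℝ) / ((n : ℝ) + 1)) p.2
  refine measurable_of_tendsto_metrizable (f := F) (fun n => ?_) ?_
  · have h1 : Measurable (fun q : ℤ × Ω => Y (((q.1 : ℝ) + 1) / ((n : ℝ) + 1)) q.2) :=
      measurable_from_prod_countable_right
        (fun k => hm (((k : ℝ) + 1) / ((n : ℝ) + 1)))
    have h2 : Measurable (fun p : ℝ × Ω => ((⌊p.1 * ((n : ℝ) + 1)⌋ : ℤ), p.2)) := by
      fun_prop
    exact h1.comp h2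
  · rw [tendsto_pi_nhds]
    rintro ⟨t, ω⟩
    refine (hrc ω t).tendsto.comp (tendsto_nhdsWithin_iff.2 ⟨?_, ?_⟩)
    · have hz : Tendsto (fun n : ℕ => t + 1 / ((n : ℝ) + 1)) atTop (𝓝 t) := by
        simpa using tendsto_const_nhds.add (tendsto_one_div_add_atTop_nhds_zero_nat (𝕜 := ℝ))
      refine tendsto_of_tendsto_of_tendsto_of_le_of_le tendsto_const_nhds hz ?_ ?_
      · intro n
        have hn : (0 : ℝ) < (n : ℝ) + 1 := by positivity
        have := Int.lt_floor_add_one (t * ((n : ℝ) + 1))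
        show t ≤ _
        rw [le_div_iff₀ hn]
        exact this.le
      · intro n
        have hn : (0 : ℝ) < (n : ℝ) + 1 := by positivity
        have := Int.floor_le (t * ((n : ℝ) + 1))
        show _ ≤ t + 1 / ((n : ℝ) + 1)
        rw [div_le_iff₀ hn, add_mul, one_div, inv_mul_cancel₀ hn.ne']
        linarith
    · refine Eventually.of_forall fun n => ?_
      have hn : (0 : ℝ) < (n : ℝ) + 1 := by positivity
      have := Int.lt_floor_add_one (t * ((n : ℝ) + 1))
      show t ≤ _
      rw [le_div_iff₀ hn]
      exact this.le

/-- A progressively measurable process is jointly measurable. -/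
lemma owp_measurable_of_prog {Ω : Type} {m0 : MeasurableSpace Ω} (ℱ : Filtration ℝ m0)
    (c : ℝ → Ω → ℝ) (hc : IsStronglyProgressive ℱ c) :
    Measurable (fun p : ℝ × Ω => c p.1 p.2) := by
  refine measurable_of_tendsto_metrizable
    (f := fun (n : ℕ) (p : ℝ × Ω) => c (min p.1 n) p.2) (fun n => ?_) ?_
  · have h1 : Measurable (fun p : Set.Iic (n : ℝ) × Ω => c p.1 p.2) := by
      refine Measurable.mono (hc (n : ℝ)).measurable ?_ le_rfl
      exact sup_le_sup le_rfl (MeasurableSpace.comap_mono (ℱ.le _))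
    have h2 : Measurable (fun p : ℝ × Ω =>
        ((⟨min p.1 n, Set.mem_Iic.2 (min_le_right _ _)⟩ : Set.Iic (n : ℝ)), p.2)) := by
      refine Measurable.prodMk (Measurable.subtype_mk ?_) measurable_snd
      fun_prop
    exact h1.comp h2
  · rw [tendsto_pi_nhds]
    rintro ⟨t, ω⟩
    refine tendsto_const_nhds.congr' ?_
    filter_upwards [eventually_ge_atTop ⌈t⌉₊] with n hn
    have : t ≤ n := (Nat.le_ceil t).trans (by exact_mod_cast hn)
    simp [min_eq_left this]

lemma owp_set_super {Ω : Type} {m0 : MeasurableSpace Ω} {μ : Measure Ω} [IsProbabilityMeasure μ]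
    (m : MeasurableSpace Ω) (hm : m ≤ m0) (U V : Ω → ℝ) (hU : Integrable U μ) (hV : Integrable V μ)
    (h : μ[U|m] ≤ᵐ[μ] V) (A : Set Ω) (hA : MeasurableSet[m] A) :
    ∫ ω in A, U ω ∂μ ≤ ∫ ω in A, V ω ∂μ := by
  rw [← setIntegral_condExp hm hU hA]
  exact setIntegral_mono_ae integrable_condExp.integrableOn hV.integrableOn h

/-- Discrete maximal inequality for nonnegative supermartingales. -/
lemma owp_max_ineq {Ω : Type} {m0 : MeasurableSpace Ω} {μ : Measure Ω} [IsProbabilityMeasure μ]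
    (ℱ : Filtration ℝ m0) (Z : ℝ → Ω → ℝ) (hZm : ∀ t, Measurable[ℱ t] (Z t))
    (hint : ∀ t : ℝ, 0 ≤ t → Integrable (Z t) μ)
    (hsuper : ∀ s t : ℝ, 0 ≤ s → s ≤ t → μ[Z t|ℱ s] ≤ᵐ[μ] Z s)
    (u : ℕ → ℝ) (hu : Monotone u) (h0 : 0 ≤ u 0) (ε : ℝ) (n : ℕ) :
    ∫ ω in {ω | ∀ j < n, Z (u j) ω < ε}, Z (u n) ω ∂μ
      + ε * μ.real {ω | ∀ j < n, Z (u j) ω < ε}ᶜ ≤ ∫ ω, Z (u 0) ω ∂μ := by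
  have hpos : ∀ k, 0 ≤ u k := fun k => h0.trans (hu (Nat.zero_le k))
  have hlt : ∀ j k, j ≤ k → MeasurableSet[ℱ (u k)] {ω | Z (u j) ω < ε} := fun j k hjk =>
    ℱ.mono (hu hjk) _ (hZm (u j) measurableSet_Iio)
  have hN : ∀ k l, k ≤ l + 1 → MeasurableSet[ℱ (u l)] {ω | ∀ j < k, Z (u j) ω < ε} := by
    intro k l hkl
    have : {ω | ∀ j < k, Z (u j) ω < ε} = ⋂ j ∈ Set.Iio k, {ω | Z (u j) ω < ε} := by
      ext ω; simp
    rw [this]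
    exact MeasurableSet.biInter (Set.to_countable _) fun j hj =>
      hlt j l (by have : j < k := hj; omega)
  induction n with
  | zero => simp
  | succ n ih =>
    refine le_trans ?_ ih
    set A := {ω | ∀ j < n, Z (u j) ω < ε} with hAdef
    set B := {ω | ∀ j < n + 1, Z (u j) ω < ε} with hBdef
    have hBm := hN (n + 1) n le_rfl
    have hAm := hN n n (by omega)
    have hB0 : MeasurableSet B := ℱ.le _ _ hBm
    have hA0 : MeasurableSet A := ℱ.le _ _ hAm
    have hBA : B ⊆ A := fun ω h j hj => h j (by omega)
    have h1 : ∫ ω in B, Z (u (n + 1)) ω ∂μ ≤ ∫ ω in B, Z (u n) ω ∂μ :=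
      owp_set_super (ℱ (u n)) (ℱ.le _) _ _ (hint _ (hpos _)) (hint _ (hpos _))
        (hsuper _ _ (hpos _) (hu (Nat.le_succ n))) B hBm
    have h2 : ∫ ω in A, Z (u n) ω ∂μ = ∫ ω in B, Z (u n) ω ∂μ + ∫ ω in A \ B, Z (u n) ω ∂μ := by
      rw [← setIntegral_union Set.disjoint_sdiff_right (hA0.diff hB0)
        (hint _ (hpos _)).integrableOn (hint _ (hpos _)).integrableOn, Set.union_diff_cancel hBA]
    have h3 : ε * μ.real (A \ B) ≤ ∫ ω in A \ B, Z (u n) ω ∂μ := by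
      have : ∫ ω in A \ B, ε ∂μ ≤ ∫ ω in A \ B, Z (u n) ω ∂μ := by
        refine setIntegral_mono_on (integrable_const _).integrableOn
          (hint _ (hpos _)).integrableOn (hA0.diff hB0) ?_
        rintro ω ⟨ha, hb⟩
        by_contra hlt'
        refine hb fun j hj => ?_
        rcases Nat.lt_succ_iff_lt_or_eq.1 hj with h | h
        · exact ha j h
        · subst h; exact not_le.1 hlt'
      simpa [mul_comm] using this
    have h4 : μ.real Bᶜ = μ.real Aᶜ + μ.real (A \ B) := by
      rw [probReal_compl_eq_one_sub hB0, probReal_compl_eq_one_sub hA0,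
        measureReal_diff hBA hB0]
      ring
    rw [h4, mul_add]
    linarith

/-- Maximal inequality for right-continuous nonnegative supermartingales. -/
lemma owp_max_ineq_cont {Ω : Type} {m0 : MeasurableSpace Ω} {μ : Measure Ω}
    [IsProbabilityMeasure μ]
    (ℱ : Filtration ℝ m0) (Z : ℝ → Ω → ℝ) (hZm : ∀ t, Measurable[ℱ t] (Z t))
    (hnn : ∀ t ω, 0 ≤ Z t ω)
    (hint : ∀ t : ℝ, 0 ≤ t → Integrable (Z t) μ)
    (hsuper : ∀ s t : ℝ, 0 ≤ s → s ≤ t → μ[Z t|ℱ s] ≤ᵐ[μ] Z s)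
    (hrc : ∀ ω t, ContinuousWithinAt (fun s => Z s ω) (Set.Ici t) t)
    (T : ℝ) (hT : 0 ≤ T) (ε : ℝ) (hε : 0 < ε) :
    μ {ω | ∃ t, T ≤ t ∧ ε < Z t ω} ≤ ENNReal.ofReal ((∫ ω, Z T ω ∂μ) / ε) := by
  let u : ℕ → ℕ → ℝ := fun k j => T + (j : ℝ) / ((k : ℝ) + 1)
  let G : ℕ → Set Ω := fun k => ⋃ n, {ω | ∀ j < n, Z (u k j) ω < ε}ᶜ
  have hG : ∀ k, μ (G k) ≤ ENNReal.ofReal ((∫ ω, Z T ω ∂μ) / ε) := by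
    intro k
    have hmono : Monotone fun n => {ω | ∀ j < n, Z (u k j) ω < ε}ᶜ := by
      intro a b hab
      exact Set.compl_subset_compl.2 fun ω h j hj => h j (lt_of_lt_of_le hj hab)
    rw [hmono.measure_iUnion]
    refine iSup_le fun n => ?_
    have hum : Monotone (u k) := by
      intro a b hab
      have : (a : ℝ) ≤ b := by exact_mod_cast hab
      show T + (a : ℝ) / ((k : ℝ) + 1) ≤ T + (b : ℝ) / ((k : ℝ) + 1)
      gcongr
    have hu0 : u k 0 = T := by simp [u]
    have := owp_max_ineq ℱ Z hZm hint hsuper (u k) hum (by rw [hu0]; exact hT) ε n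
    rw [hu0] at this
    have h0 : 0 ≤ ∫ ω in {ω | ∀ j < n, Z (u k j) ω < ε}, Z (u k n) ω ∂μ :=
      integral_nonneg fun ω => hnn _ _
    rw [← ofReal_measureReal]
    refine ENNReal.ofReal_le_ofReal ?_
    rw [le_div_iff₀ hε]
    linarith
  have hsub : {ω | ∃ t, T ≤ t ∧ ε < Z t ω} ⊆ ⋃ K : ℕ, ⋂ k ∈ Set.Ici K, G k := by
    rintro ω ⟨t, hTt, hZt⟩
    have hlim : Tendsto (fun k : ℕ => u k ⌈(t - T) * ((k : ℝ) + 1)⌉₊) atTop (𝓝[≥] t) := by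
      have hlow : ∀ k : ℕ, t ≤ u k ⌈(t - T) * ((k : ℝ) + 1)⌉₊ := by
        intro k
        have hn : (0 : ℝ) < (k : ℝ) + 1 := by positivity
        have h1 := Nat.le_ceil ((t - T) * ((k : ℝ) + 1))
        have : t - T ≤ (⌈(t - T) * ((k : ℝ) + 1)⌉₊ : ℝ) / ((k : ℝ) + 1) := by
          rw [le_div_iff₀ hn]; exact h1
        show t ≤ T + _
        linarith
      refine tendsto_nhdsWithin_iff.2 ⟨?_, Eventually.of_forall hlow⟩
      have hz : Tendsto (fun n : ℕ => t + 1 / ((n : ℝ) + 1)) atTop (𝓝 t) := by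
        simpa using tendsto_const_nhds.add (tendsto_one_div_add_atTop_nhds_zero_nat (𝕜 := ℝ))
      refine tendsto_of_tendsto_of_tendsto_of_le_of_le tendsto_const_nhds hz hlow ?_
      intro k
      have hn : (0 : ℝ) < (k : ℝ) + 1 := by positivity
      have h1 := Nat.ceil_lt_add_one (mul_nonneg (sub_nonneg.2 hTt) hn.le)
      have : (⌈(t - T) * ((k : ℝ) + 1)⌉₊ : ℝ) / ((k : ℝ) + 1) ≤ t - T + 1 / ((k : ℝ) + 1) := by
        rw [div_le_iff₀ hn, add_mul, one_div, inv_mul_cancel₀ hn.ne']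
        exact h1.le
      show T + _ ≤ t + 1 / ((k : ℝ) + 1)
      linarith
    have hev := ((hrc ω t).tendsto.comp hlim).eventually (lt_mem_nhds hZt)
    obtain ⟨K, hK⟩ := eventually_atTop.1 hev
    simp only [Set.mem_iUnion, Set.mem_iInter]
    refine ⟨K, fun k hk => ?_⟩
    refine Set.mem_iUnion.2 ⟨⌈(t - T) * ((k : ℝ) + 1)⌉₊ + 1, fun h => ?_⟩
    exact absurd (h _ (Nat.lt_succ_self _)) (not_lt.2 (hK k hk).le)
  refine (measure_mono hsub).trans ?_
  have hmono : Monotone fun K : ℕ => ⋂ k ∈ Set.Ici K, G k := by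
    intro a b hab
    exact Set.biInter_subset_biInter_left (Set.Ici_subset_Ici.2 hab)
  rw [hmono.measure_iUnion]
  exact iSup_le fun K => (measure_mono (Set.biInter_subset_of_mem (Set.mem_Ici.2 le_rfl))).trans (hG K)

/-- A right-continuous nonnegative supermartingale with vanishing expectation vanishes a.s. -/
lemma owp_potential_tendsto {Ω : Type} {m0 : MeasurableSpace Ω} {μ : Measure Ω}
    [IsProbabilityMeasure μ]
    (ℱ : Filtration ℝ m0) (Z : ℝ → Ω → ℝ) (hZm : ∀ t, Measurable[ℱ t] (Z t))
    (hnn : ∀ t ω, 0 ≤ Z t ω)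
    (hint : ∀ t : ℝ, 0 ≤ t → Integrable (Z t) μ)
    (hsuper : ∀ s t : ℝ, 0 ≤ s → s ≤ t → μ[Z t|ℱ s] ≤ᵐ[μ] Z s)
    (hrc : ∀ ω t, ContinuousWithinAt (fun s => Z s ω) (Set.Ici t) t)
    (hlim : Tendsto (fun t => ∫ ω, Z t ω ∂μ) atTop (𝓝 0)) :
    ∀ᵐ ω ∂μ, Tendsto (fun t => Z t ω) atTop (𝓝 0) := by
  have key : ∀ m : ℕ, ∀ᵐ ω ∂μ, ∃ T, ∀ t, T ≤ t → Z t ω ≤ 1 / ((m : ℝ) + 1) := by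
    intro m
    have hε : (0 : ℝ) < 1 / ((m : ℝ) + 1) := by positivity
    rw [ae_iff, ← nonpos_iff_eq_zero]
    have h1 : Tendsto (fun T => ENNReal.ofReal ((∫ ω, Z T ω ∂μ) / (1 / ((m : ℝ) + 1)))) atTop
        (𝓝 0) := by
      have := ENNReal.tendsto_ofReal (hlim.div_const (1 / ((m : ℝ) + 1)))
      simpa using this
    refine ge_of_tendsto h1 ?_
    filter_upwards [eventually_ge_atTop 0] with T hT
    refine (measure_mono ?_).trans (owp_max_ineq_cont ℱ Z hZm hnn hint hsuper hrc T hT _ hε)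
    intro ω hω
    simp only [Set.mem_ofPred_eq, not_exists, not_forall, not_le] at hω
    obtain ⟨t, ht, h⟩ := hω T
    exact ⟨t, ht, h⟩
  filter_upwards [ae_all_iff.2 key] with ω hω
  rw [Metric.tendsto_atTop]
  intro ε hε
  obtain ⟨m, hm⟩ := exists_nat_one_div_lt hε
  obtain ⟨T, hT⟩ := hω m
  refine ⟨T, fun t ht => ?_⟩
  rw [Real.dist_eq, sub_zero, abs_of_nonneg (hnn _ _)]
  exact (hT t ht).trans_lt hm

/-- **Optimal wealth process** (Proposition `owp`): if `Λ_t = X_t Y_t +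
∫₀^t (c_s − f_s) Y_s ds` is a supermartingale with `Λ₀ = 1`, `XY` is a
nonnegative càdlàg supermartingale, and the budget constraint is saturated,
`E[∫₀^∞ (c − f) Y dt] = 1`, then `Λ` is a uniformly integrable martingale on
`[0,∞]`, `XY` is a potential with `X_∞ Y_∞ = 0` a.s., and
`X_t Y_t = E[∫_t^∞ (c_s − f_s) Y_s ds | ℱ_t]`. -/
theorem optimal_wealth_process
    {Ω : Type} {m0 : MeasurableSpace Ω} {μ : Measure Ω} [IsProbabilityMeasure μ]
    (ℱ : Filtration ℝ m0)
    (husual_right : ∀ t : ℝ, (ℱ t : MeasurableSpace Ω) = ⨅ (s : ℝ) (_ : t < s), ℱ s)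
    (husual_complete : ∀ (t : ℝ) (A : Set Ω), μ A = 0 → MeasurableSet[ℱ t] A)
    (X Y c f : ℝ → Ω → ℝ)
    (hX_adapted : Adapted ℱ X) (hY_adapted : Adapted ℱ Y)
    (hX_rc : ∀ ω t, ContinuousWithinAt (fun s => X s ω) (Set.Ici t) t)
    (hX_ll : ∀ ω t, ∃ l : ℝ, Tendsto (fun s => X s ω) (𝓝[<] t) (𝓝 l))
    (hY_rc : ∀ ω t, ContinuousWithinAt (fun s => Y s ω) (Set.Ici t) t)
    (hY_ll : ∀ ω t, ∃ l : ℝ, Tendsto (fun s => Y s ω) (𝓝[<] t) (𝓝 l))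
    (hXnn : ∀ t ω, 0 ≤ X t ω) (hYnn : ∀ t ω, 0 ≤ Y t ω)
    (hc : ProgMeasurable ℱ c) (hf : ProgMeasurable ℱ f)
    (hcnn : ∀ t ω, 0 ≤ c t ω) (hfnn : ∀ t ω, 0 ≤ f t ω)
    (hfY : (∫⁻ ω, (∫⁻ t in Set.Ioi (0:ℝ), ENNReal.ofReal (f t ω * Y t ω)) ∂μ) < ⊤)
    (hcY : (∫⁻ ω, (∫⁻ t in Set.Ioi (0:ℝ), ENNReal.ofReal (c t ω * Y t ω)) ∂μ) < ⊤)
    (hXY_int : ∀ t : ℝ, 0 ≤ t → Integrable (fun ω => X t ω * Y t ω) μ)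
    (hXY_super : ∀ s t : ℝ, 0 ≤ s → s ≤ t →
      μ[fun ω => X t ω * Y t ω|ℱ s] ≤ᵐ[μ] fun ω => X s ω * Y s ω)
    (Λ : ℝ → Ω → ℝ)
    (hΛ : ∀ t : ℝ, 0 ≤ t → ∀ ω, Λ t ω =
      X t ω * Y t ω + ∫ s in Set.Ioc (0:ℝ) t, (c s ω - f s ω) * Y s ω)
    (hΛ_adapted : ∀ t : ℝ, 0 ≤ t → StronglyMeasurable[ℱ t] (Λ t))
    (hΛ_int : ∀ t : ℝ, 0 ≤ t → Integrable (Λ t) μ)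
    (hΛ_super : ∀ s t : ℝ, 0 ≤ s → s ≤ t → μ[Λ t|ℱ s] ≤ᵐ[μ] Λ s)
    (hΛ0 : ∀ ω, Λ 0 ω = 1)
    (hsaturated : (∫ ω, (∫ t in Set.Ioi (0:ℝ), (c t ω - f t ω) * Y t ω) ∂μ) = 1) :
    -- (i) Λ is a martingale on [0,∞)
    (∀ s t : ℝ, 0 ≤ s → s ≤ t → μ[Λ t|ℱ s] =ᵐ[μ] Λ s) ∧
    -- (ii) Λ converges a.s. to an integrable limit and, extended by it,
    -- is a uniformly integrable martingale
    (∃ Λinf : Ω → ℝ, Integrable Λinf μ ∧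
      (∀ᵐ ω ∂μ, Tendsto (fun t => Λ t ω) atTop (𝓝 (Λinf ω))) ∧
      (∀ t : ℝ, 0 ≤ t → μ[Λinf|ℱ t] =ᵐ[μ] Λ t)) ∧
    (∀ ε : ℝ, 0 < ε → ∃ K : ℝ, ∀ t : ℝ, 0 ≤ t →
      (∫⁻ ω in {ω | K ≤ |Λ t ω|}, ENNReal.ofReal |Λ t ω| ∂μ) ≤ ENNReal.ofReal ε) ∧
    -- (iii) XY is a potential
    Tendsto (fun t : ℝ => ∫ ω, X t ω * Y t ω ∂μ) atTop (𝓝 (0:ℝ)) ∧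
    -- (iv) X_t Y_t → 0 a.s.
    (∀ᵐ ω ∂μ, Tendsto (fun t => X t ω * Y t ω) atTop (𝓝 (0:ℝ))) ∧
    -- consequently X_t Y_t = E[∫_t^∞ (c − f) Y ds | ℱ_t]
    (∀ t : ℝ, 0 ≤ t →
      (μ[fun ω => ∫ s in Set.Ioi t, (c s ω - f s ω) * Y s ω|ℱ t]
        =ᵐ[μ] fun ω => X t ω * Y t ω)) := by
  -- joint measurability
  have hYj := owp_measurable_of_rc Y (fun t => (hY_adapted t).mono (ℱ.le t) le_rfl) hY_rc
  have hcj := owp_measurable_of_prog ℱ c hc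
  have hfj := owp_measurable_of_prog ℱ f hf
  have hprod : ∀ h : ℝ → Ω → ℝ, Measurable (fun p : ℝ × Ω => h p.1 p.2) → (∀ t ω, 0 ≤ h t ω) →
      (∫⁻ ω, (∫⁻ t in Set.Ioi (0:ℝ), ENNReal.ofReal (h t ω * Y t ω)) ∂μ) < ⊤ →
      Integrable (fun p : Ω × ℝ => h p.2 p.1 * Y p.2 p.1)
        (μ.prod (volume.restrict (Set.Ioi (0:ℝ)))) := by
    intro h hm hn hfin
    have hmeas : Measurable (fun p : Ω × ℝ => h p.2 p.1 * Y p.2 p.1) :=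
      (hm.comp measurable_swap).mul (hYj.comp measurable_swap)
    refine ⟨hmeas.aestronglyMeasurable, ?_⟩
    rw [hasFiniteIntegral_iff_ofReal
      (Eventually.of_forall fun p => mul_nonneg (hn _ _) (hYnn _ _)),
      lintegral_prod _ hmeas.ennreal_ofReal.aemeasurable]
    exact hfin
  have hg : Integrable (fun p : Ω × ℝ => (c p.2 p.1 - f p.2 p.1) * Y p.2 p.1)
      (μ.prod (volume.restrict (Set.Ioi (0:ℝ)))) := by
    refine ((hprod c hcj hcnn hcY).sub (hprod f hfj hfnn hfY)).congr
      (Eventually.of_forall fun p => ?_)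
    simp [sub_mul]
  -- pathwise integrability and integrability of the total variation
  have hgω : ∀ᵐ ω ∂μ, IntegrableOn (fun s => (c s ω - f s ω) * Y s ω) (Set.Ioi (0:ℝ)) :=
    hg.prod_right_ae
  have hD : Integrable (fun ω => ∫ s in Set.Ioi (0:ℝ), ‖(c s ω - f s ω) * Y s ω‖) μ :=
    hg.norm.integral_prod_left
  have hAinf : Integrable (fun ω => ∫ s in Set.Ioi (0:ℝ), (c s ω - f s ω) * Y s ω) μ :=
    hg.integral_prod_left
  have hAeq : ∀ t, 0 ≤ t → (fun ω => ∫ s in Set.Ioc (0:ℝ) t, (c s ω - f s ω) * Y s ω)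
      = fun ω => Λ t ω - X t ω * Y t ω := by
    intro t ht; funext ω; rw [hΛ t ht ω]; ring
  have hA : ∀ t, 0 ≤ t →
      Integrable (fun ω => ∫ s in Set.Ioc (0:ℝ) t, (c s ω - f s ω) * Y s ω) μ := by
    intro t ht
    rw [hAeq t ht]
    exact (hΛ_int t ht).sub (hXY_int t ht)
  have hAconv : ∀ᵐ ω ∂μ, Tendsto (fun t => ∫ s in Set.Ioc (0:ℝ) t, (c s ω - f s ω) * Y s ω)
      atTop (𝓝 (∫ s in Set.Ioi (0:ℝ), (c s ω - f s ω) * Y s ω)) := by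
    filter_upwards [hgω] with ω hω
    have hU : (⋃ t : ℝ, Set.Ioc (0:ℝ) t) = Set.Ioi 0 := by
      ext x
      simp only [Set.mem_iUnion, Set.mem_Ioc, Set.mem_Ioi]
      exact ⟨fun ⟨_, h, _⟩ => h, fun h => ⟨x, h, le_rfl⟩⟩
    have := tendsto_setIntegral_of_monotone (s := fun t : ℝ => Set.Ioc (0:ℝ) t)
      (μ := volume) (f := fun s => (c s ω - f s ω) * Y s ω)
      (fun _ => measurableSet_Ioc) (fun a b hab => Set.Ioc_subset_Ioc_right hab)
      (by rw [hU]; exact hω)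
    rwa [hU] at this
  have hAbound : ∀ t, ∀ᵐ ω ∂μ, ‖∫ s in Set.Ioc (0:ℝ) t, (c s ω - f s ω) * Y s ω‖
      ≤ ∫ s in Set.Ioi (0:ℝ), ‖(c s ω - f s ω) * Y s ω‖ := by
    intro t
    filter_upwards [hgω] with ω hω
    refine (norm_integral_le_integral_norm _).trans ?_
    exact setIntegral_mono_set hω.norm (Eventually.of_forall fun _ => norm_nonneg _)
      (Eventually.of_forall Set.Ioc_subset_Ioi_self)
  have hAset : ∀ S : Set Ω, Tendsto
      (fun t => ∫ ω in S, (∫ s in Set.Ioc (0:ℝ) t, (c s ω - f s ω) * Y s ω) ∂μ) atTop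
      (𝓝 (∫ ω in S, (∫ s in Set.Ioi (0:ℝ), (c s ω - f s ω) * Y s ω) ∂μ)) := by
    intro S
    refine tendsto_integral_filter_of_dominated_convergence
      (fun ω => ∫ s in Set.Ioi (0:ℝ), ‖(c s ω - f s ω) * Y s ω‖) ?_ ?_ hD.restrict ?_
    · filter_upwards [eventually_ge_atTop 0] with t ht
      exact (hA t ht).restrict.aestronglyMeasurable
    · exact Eventually.of_forall fun t => ae_restrict_of_ae (hAbound t)
    · exact ae_restrict_of_ae hAconv
  have hAexp : Tendsto (fun t => ∫ ω, (∫ s in Set.Ioc (0:ℝ) t, (c s ω - f s ω) * Y s ω) ∂μ)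
      atTop (𝓝 1) := by
    have := hAset Set.univ
    simpa only [Measure.restrict_univ, hsaturated] using this
  have hsplit : ∀ t, 0 ≤ t → ∫ ω, Λ t ω ∂μ = (∫ ω, X t ω * Y t ω ∂μ)
      + ∫ ω, (∫ s in Set.Ioc (0:ℝ) t, (c s ω - f s ω) * Y s ω) ∂μ := by
    intro t ht
    rw [← integral_add (hXY_int t ht) (hA t ht)]
    exact integral_congr_ae (Eventually.of_forall fun ω => hΛ t ht ω)
  have hmono : ∀ s t, 0 ≤ s → s ≤ t → ∫ ω, Λ t ω ∂μ ≤ ∫ ω, Λ s ω ∂μ := by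
    intro s t hs hst
    have := owp_set_super (ℱ s) (ℱ.le s) (Λ t) (Λ s) (hΛ_int t (hs.trans hst)) (hΛ_int s hs)
      (hΛ_super s t hs hst) Set.univ MeasurableSet.univ
    simpa using this
  have hE0 : ∫ ω, Λ 0 ω ∂μ = 1 := by simp [hΛ0]
  have hXYnn : ∀ t, 0 ≤ ∫ ω, X t ω * Y t ω ∂μ := fun t =>
    integral_nonneg fun ω => mul_nonneg (hXnn _ _) (hYnn _ _)
  -- (iii)
  have h3 : Tendsto (fun t : ℝ => ∫ ω, X t ω * Y t ω ∂μ) atTop (𝓝 (0:ℝ)) := by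
    have hup : Tendsto (fun t =>
        1 - ∫ ω, (∫ s in Set.Ioc (0:ℝ) t, (c s ω - f s ω) * Y s ω) ∂μ) atTop (𝓝 0) := by
      simpa using (tendsto_const_nhds (x := (1:ℝ))).sub hAexp
    refine tendsto_of_tendsto_of_tendsto_of_le_of_le' tendsto_const_nhds hup
      (Eventually.of_forall hXYnn) ?_
    filter_upwards [eventually_ge_atTop 0] with t ht
    have h1 := hsplit t ht
    have h2 := hmono 0 t le_rfl ht
    linarith
  have hEΛ : ∀ t, 0 ≤ t → ∫ ω, Λ t ω ∂μ = 1 := by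
    intro t ht
    refine le_antisymm (hE0 ▸ hmono 0 t le_rfl ht) ?_
    refine le_of_tendsto hAexp ?_
    filter_upwards [eventually_ge_atTop t] with r hr
    have h1 := hsplit r (ht.trans hr)
    have h2 := hmono t r ht hr
    have h3 := hXYnn r
    linarith
  -- (i)
  have h1 : ∀ s t : ℝ, 0 ≤ s → s ≤ t → μ[Λ t|ℱ s] =ᵐ[μ] Λ s := by
    intro s t hs hst
    refine (integral_eq_iff_of_ae_le integrable_condExp (hΛ_int s hs) (hΛ_super s t hs hst)).1 ?_
    rw [integral_condExp (ℱ.le s), hEΛ s hs, hEΛ t (hs.trans hst)]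
  -- (iv)
  have h4 : ∀ᵐ ω ∂μ, Tendsto (fun t => X t ω * Y t ω) atTop (𝓝 (0:ℝ)) :=
    owp_potential_tendsto ℱ (fun t ω => X t ω * Y t ω)
      (fun t => (hX_adapted t).mul (hY_adapted t))
      (fun t ω => mul_nonneg (hXnn _ _) (hYnn _ _)) hXY_int hXY_super
      (fun ω t => (hX_rc ω t).mul (hY_rc ω t)) h3
  -- (ii)
  have h2 : ∀ t : ℝ, 0 ≤ t →
      μ[fun ω => ∫ s in Set.Ioi (0:ℝ), (c s ω - f s ω) * Y s ω|ℱ t] =ᵐ[μ] Λ t := by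
    intro t ht
    symm
    refine ae_eq_condExp_of_forall_setIntegral_eq (ℱ.le t) hAinf
      (fun _ _ _ => (hΛ_int t ht).integrableOn) ?_ (hΛ_adapted t ht).aestronglyMeasurable
    intro S hS _
    have hXYS : Tendsto (fun r => ∫ ω in S, X r ω * Y r ω ∂μ) atTop (𝓝 0) := by
      refine tendsto_of_tendsto_of_tendsto_of_le_of_le' tendsto_const_nhds h3
        (Eventually.of_forall fun r =>
          integral_nonneg fun ω => mul_nonneg (hXnn _ _) (hYnn _ _)) ?_
      filter_upwards [eventually_ge_atTop 0] with r hr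
      exact setIntegral_le_integral (hXY_int r hr)
        (Eventually.of_forall fun ω => mul_nonneg (hXnn _ _) (hYnn _ _))
    have hsum := hXYS.add (hAset S)
    rw [zero_add] at hsum
    refine tendsto_nhds_unique (tendsto_const_nhds.congr' ?_) hsum
    filter_upwards [eventually_ge_atTop t] with r hr
    have hr0 := ht.trans hr
    rw [← integral_add (hXY_int r hr0).restrict (hA r hr0).restrict,
      ← setIntegral_congr_ae (ℱ.le t _ hS) ((h1 t r ht hr).mono fun ω h _ => h),
      setIntegral_condExp (ℱ.le t) (hΛ_int r hr0) hS]
    exact integral_congr_ae (Eventually.of_forall fun ω => hΛ r hr0 ω)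
  refine ⟨h1, ⟨_, hAinf, ?_, h2⟩, ?_, h3, h4, ?_⟩
  · filter_upwards [h4, hAconv] with ω hω1 hω2
    have := hω1.add hω2
    rw [zero_add] at this
    refine this.congr' ?_
    filter_upwards [eventually_ge_atTop 0] with t ht
    exact (hΛ t ht ω).symm
  · intro ε hε
    have hUI : UniformIntegrable (fun t : Set.Ici (0:ℝ) => Λ t) 1 μ :=
      (hAinf.uniformIntegrable_condExp (ℱ := fun t : Set.Ici (0:ℝ) => ℱ t)
        (fun t => ℱ.le t)).ae_eq (fun t => h2 t t.2)
    obtain ⟨C, hC⟩ := hUI.spec one_ne_zero ENNReal.one_ne_top hε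
    refine ⟨C, fun t ht => ?_⟩
    have := hC ⟨t, ht⟩
    have hset : {ω | (C : ℝ) ≤ |Λ t ω|} = {ω | C ≤ ‖Λ t ω‖₊} := by
      ext ω
      simp only [Set.mem_ofPred_eq, ← NNReal.coe_le_coe, coe_nnnorm, Real.norm_eq_abs]
    have hmS : MeasurableSet {ω | C ≤ ‖Λ t ω‖₊} :=
      measurableSet_le measurable_const
        ((hΛ_adapted t ht).mono (ℱ.le t)).measurable.nnnorm
    rw [eLpNorm_indicator_eq_eLpNorm_restrict hmS, eLpNorm_one_eq_lintegral_enorm] at this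
    rw [hset]
    refine le_trans (le_of_eq ?_) this
    refine lintegral_congr fun ω => ?_
    rw [← Real.norm_eq_abs, ofReal_norm_eq_enorm]
  · intro t ht
    have hAt_meas : StronglyMeasurable[ℱ t]
        (fun ω => ∫ s in Set.Ioc (0:ℝ) t, (c s ω - f s ω) * Y s ω) := by
      rw [hAeq t ht]
      exact (hΛ_adapted t ht).sub
        ((hX_adapted t).mul (hY_adapted t)).stronglyMeasurable
    have hdec : (fun ω => ∫ s in Set.Ioi t, (c s ω - f s ω) * Y s ω) =ᵐ[μ]
        (fun ω => ∫ s in Set.Ioi (0:ℝ), (c s ω - f s ω) * Y s ω)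
          - (fun ω => ∫ s in Set.Ioc (0:ℝ) t, (c s ω - f s ω) * Y s ω) := by
      filter_upwards [hgω] with ω hω
      have hU : Set.Ioi (0:ℝ) = Set.Ioc 0 t ∪ Set.Ioi t := (Set.Ioc_union_Ioi_eq_Ioi ht).symm
      have hd : Disjoint (Set.Ioc (0:ℝ) t) (Set.Ioi t) :=
        Set.disjoint_left.2 fun x hx hx' => absurd hx.2 (not_le.2 hx')
      simp only [Pi.sub_apply]
      rw [hU, setIntegral_union hd measurableSet_Ioi
        (hω.mono_set Set.Ioc_subset_Ioi_self) (hω.mono_set (Set.Ioi_subset_Ioi ht))]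
      ring
    have hself := condExp_of_stronglyMeasurable (ℱ.le t) hAt_meas (hA t ht)
    filter_upwards [condExp_congr_ae (m := ℱ t) hdec, condExp_sub hAinf (hA t ht) (ℱ t), h2 t ht]
      with ω e1 e2 e3
    rw [e1, e2, Pi.sub_apply, e3, hself, hΛ t ht ω]
    ring
end
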